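/- Let A be a complex semisimple unital Banach algebra with Soc A ≠ {0}. Then A is prime if and only if for all a, b ∈ A the following are equivalent: (i) ρ(ax) ≤ ρ(bx) for all x ∈ A; (ii) a = λb for some λ ∈ ℂ with |λ| ≤ 1. -/

import Mathlib

open Complex

noncomputable section

/-- The nonzero spectrum `σ'(x) = σ(x) \ {0}` of an element of a complex algebra. -/
def nzSpec {A : Type*} [Ring A] [Algebra ℂ A] (x : A) : Set ℂ :=
  spectrum ℂ x \ {0}

/-- The spectral rank of an element: `rank a = sup_{x ∈ A} #σ'(xa)`, valued in `ℕ∞`. -/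
noncomputable def srank {A : Type*} [Ring A] [Algebra ℂ A] (a : A) : ℕ∞ :=
  ⨆ x : A, (nzSpec (x * a)).encard

/-- The socle of `A`: the set of finite-rank elements. -/
def socle (A : Type*) [Ring A] [Algebra ℂ A] : Set A :=
  {a : A | srank a ≠ ⊤}

/-- `A` is (Jacobson) semisimple: its Jacobson radical is `{0}`. -/
def JacobsonSemisimple (A : Type*) [Ring A] : Prop :=
  TwoSidedIdeal.jacobson (⊥ : TwoSidedIdeal A) = ⊥

/-- `Soc A` is a minimal two-sided ideal: it is a nonzero two-sided ideal containing
no two-sided ideals other than `{0}` and itself. -/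
def SocleIsMinimalTwoSidedIdeal (A : Type*) [Ring A] [Algebra ℂ A] : Prop :=
  ∃ I : TwoSidedIdeal A, (I : Set A) = socle A ∧ I ≠ ⊥ ∧
    ∀ J : TwoSidedIdeal A, J ≤ I → J = ⊥ ∨ J = I

/-- `A` is a prime algebra: all nonzero two-sided ideals `I, J` satisfy `IJ ≠ {0}`. -/
def IsPrimeAlgebra (A : Type*) [Ring A] : Prop :=
  ∀ I J : TwoSidedIdeal A, I ≠ ⊥ → J ≠ ⊥ → ∃ x ∈ I, ∃ y ∈ J, x * y ≠ 0

/-- The left annihilator of the socle equals `{0}`. -/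
def LeftAnnSocleTrivial (A : Type*) [Ring A] [Algebra ℂ A] : Prop :=
  {x : A | ∀ y ∈ socle A, x * y = 0} = {0}

section Helpers

set_option linter.unusedSectionVars false

variable {A : Type*} [NormedRing A] [NormOneClass A] [NormedAlgebra ℂ A] [CompleteSpace A]

lemma nzSpec_comm (a b : A) : nzSpec (a * b) = nzSpec (b * a) :=
  spectrum.nonzero_mul_comm a b

lemma rho_le_of_nzSpec (a b : A) (h : nzSpec a ⊆ nzSpec b) :
    spectralRadius ℂ a ≤ spectralRadius ℂ b := by
  unfold spectralRadius
  refine iSup₂_le fun k hk => ?_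
  by_cases h0 : k = 0
  · simp [h0]
  · have : k ∈ nzSpec b := h ⟨hk, h0⟩
    exact le_iSup₂ (f := fun k (_ : k ∈ spectrum ℂ b) => (‖k‖₊ : ENNReal)) k this.1

lemma rho_comm (a b : A) : spectralRadius ℂ (a * b) = spectralRadius ℂ (b * a) :=
  le_antisymm (rho_le_of_nzSpec _ _ (nzSpec_comm a b).subset)
    (rho_le_of_nzSpec _ _ (nzSpec_comm b a).subset)

lemma eq_zero_of_rad (hss : JacobsonSemisimple A) (z : A) (h : ∀ y, nzSpec (y * z) = ∅) :
    z = 0 := by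
  have : z ∈ TwoSidedIdeal.jacobson (⊥ : TwoSidedIdeal A) := by
    rw [TwoSidedIdeal.mem_jacobson_iff]
    intro y
    have h1 : (-1 : ℂ) ∉ spectrum ℂ (y * z) := by
      intro hm
      have : (-1 : ℂ) ∈ nzSpec (y * z) := ⟨hm, by simp⟩
      rw [h y] at this
      exact this
    rw [spectrum.notMem_iff] at h1
    have h2 : IsUnit (1 + y * z) := by
      have := h1.neg
      simpa [add_comm] using this
    obtain ⟨u, hu⟩ := h2
    refine ⟨(↑u⁻¹ : A), ?_⟩
    have : (↑u⁻¹ : A) * y * z + ↑u⁻¹ - 1 = 0 := by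
      have h3 : (↑u⁻¹ : A) * (1 + y * z) = 1 := by rw [← hu]; simp
      rw [← h3]; noncomm_ring
    rw [this]
    exact TwoSidedIdeal.zero_mem _
  rw [hss] at this
  simpa using this

lemma eq_zero_of_semiprime (hss : JacobsonSemisimple A) (z : A) (h : ∀ y, z * y * z = 0) :
    z = 0 := by
  apply eq_zero_of_rad hss
  intro y
  ext k
  simp only [Set.mem_empty_iff_false, iff_false]
  rintro ⟨hk, h0⟩
  apply hk
  have h0 : k ≠ 0 := h0
  have h1 : (y * z) * (y * z) = 0 := by
    rw [mul_assoc, ← mul_assoc z, h, mul_zero]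
  have e1 : (algebraMap ℂ A k - y * z) * (algebraMap ℂ A k + y * z) = algebraMap ℂ A (k * k) := by
    rw [sub_mul, mul_add, mul_add, h1, map_mul, Algebra.commutes k (y * z)]; abel
  have hc : Commute (algebraMap ℂ A k - y * z) (algebraMap ℂ A k + y * z) := by
    have : Commute (algebraMap ℂ A k) (y * z) := Algebra.commutes k (y * z)
    exact ((Commute.refl _).add_right this).sub_left (this.symm.add_right (Commute.refl _))
  have hu : IsUnit (algebraMap ℂ A (k * k)) := (IsUnit.mk0 (k * k) (mul_ne_zero h0 h0)).map _
  rw [← e1] at hu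
  exact (hc.isUnit_mul_iff.1 hu).1

lemma nzSpec_add_of_orth (u v : A) (h : u * v = 0) (h' : v * u = 0) :
    nzSpec u ⊆ nzSpec (u + v) := by
  rintro k ⟨hk, h0⟩
  refine ⟨fun hu => hk ?_, h0⟩
  have h0 : k ≠ 0 := h0
  have e1 : (algebraMap ℂ A k - u) * (algebraMap ℂ A k - v)
      = algebraMap ℂ A k * (algebraMap ℂ A k - (u + v)) := by
    rw [sub_mul, mul_sub, mul_sub, mul_sub, h, ← Algebra.commutes k u, mul_add]; abel
  have hc : Commute (algebraMap ℂ A k - u) (algebraMap ℂ A k - v) := by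
    have h1 : Commute (algebraMap ℂ A k) u := Algebra.commutes k u
    have h2 : Commute (algebraMap ℂ A k) v := Algebra.commutes k v
    have h3 : Commute u v := by rw [Commute, SemiconjBy, h, h']
    exact ((Commute.refl _).sub_right h2).sub_left (h1.symm.sub_right h3)
  have hu2 : IsUnit ((algebraMap ℂ A k - u) * (algebraMap ℂ A k - v)) := by
    rw [e1]
    exact ((IsUnit.mk0 k h0).map _).mul hu
  exact (hc.isUnit_mul_iff.1 hu2).1

/-- the easy direction, which does not use the socle -/
lemma prime_of_dom (hss : JacobsonSemisimple A)
    (H : ∀ a b : A,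
        ((∀ x : A, spectralRadius ℂ (a * x) ≤ spectralRadius ℂ (b * x)) ↔
          ∃ lam : ℂ, ‖lam‖ ≤ 1 ∧ a = lam • b)) : IsPrimeAlgebra A := by
  intro I J hI hJ
  by_contra! hc
  obtain ⟨a, ha, ha0⟩ : ∃ a ∈ I, a ≠ 0 := by
    by_contra! h
    exact hI (by ext x; simpa using ⟨fun hx => h x hx, fun hx => hx ▸ I.zero_mem⟩)
  obtain ⟨b, hb, hb0⟩ : ∃ b ∈ J, b ≠ 0 := by
    by_contra! h
    exact hJ (by ext x; simpa using ⟨fun hx => h x hx, fun hx => hx ▸ J.zero_mem⟩)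
  have hab : ∀ x, a * x * b = 0 := fun x => hc _ (I.mul_mem_right _ _ ha) _ hb
  have hba : ∀ x, b * x * a = 0 := fun x => by
    apply eq_zero_of_semiprime hss
    intro y
    have : b * x * a * y * (b * x * a) = b * x * (a * y * b) * (x * a) := by noncomm_ring
    rw [this, hab]; simp
  obtain ⟨l, -, hl⟩ := (H a (a + b)).1 (fun x => by
    rw [add_mul]
    apply rho_le_of_nzSpec
    apply nzSpec_add_of_orth
    · rw [← mul_assoc, hab, zero_mul]
    · rw [← mul_assoc, hba, zero_mul])
  apply ha0
  apply eq_zero_of_semiprime hss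
  intro y
  by_cases h1 : l = 1
  · exfalso
    subst h1
    rw [one_smul] at hl
    exact hb0 (by simpa using hl)
  · have h2 : (1 - l) • (a * y * a) = 0 := by
      have : a * y * a = l • (a * y * a) := by
        calc a * y * a = (l • (a + b)) * y * a := by rw [← hl]
          _ = l • (a * y * a) + l • (b * y * a) := by
            rw [smul_mul_assoc, smul_mul_assoc, add_mul, add_mul, smul_add]
          _ = l • (a * y * a) := by rw [hba, smul_zero, add_zero]
      rw [sub_smul, one_smul, ← this, sub_self]
    exact (smul_eq_zero.1 h2).resolve_left (sub_ne_zero.2 (Ne.symm h1))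

/-! quasinilpotent elements -/

lemma qn_pow (r : A) (h : nzSpec r = ∅) (ε : ℝ) (hε : 0 < ε) :
    ∀ᶠ n : ℕ in Filter.atTop, ‖r ^ n‖ ≤ ε ^ n := by
  have h0 : spectralRadius ℂ r = 0 := by
    refine le_antisymm ?_ bot_le
    have := rho_le_of_nzSpec r 0 (by rw [h]; exact Set.empty_subset _)
    simpa using this
  have h1 := spectrum.pow_norm_pow_one_div_tendsto_nhds_spectralRadius r
  rw [h0] at h1
  have h2 := h1.eventually (gt_mem_nhds (show (0 : ENNReal) < ENNReal.ofReal ε by simpa using hε))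
  filter_upwards [h2, Filter.eventually_gt_atTop 0] with n hn hn0
  rw [ENNReal.ofReal_lt_ofReal_iff hε] at hn
  have h3 : (‖r ^ n‖ ^ (1 / n : ℝ)) ^ n ≤ ε ^ n := pow_le_pow_left₀ (by positivity) hn.le n
  rw [one_div, Real.rpow_inv_natCast_pow (norm_nonneg _) hn0.ne'] at h3
  exact h3

lemma qn_mul (r w : A) (hc : Commute r w) (h : nzSpec r = ∅) : nzSpec (r * w) = ∅ := by
  ext k
  simp only [Set.mem_empty_iff_false, iff_false]
  rintro ⟨hk, h0⟩
  have h0 : 0 < ‖k‖ := norm_pos_iff.2 h0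
  obtain ⟨n, hn, hn0⟩ := ((qn_pow r h (‖k‖ / (2 * (‖w‖ + 1))) (by positivity)).and
    (Filter.eventually_gt_atTop 0)).exists
  have h1 := spectrum.norm_le_norm_of_mem (spectrum.pow_mem_pow (r * w) n hk)
  rw [hc.mul_pow, norm_pow] at h1
  have h2 : ‖k‖ ^ n ≤ (‖k‖ / (2 * (‖w‖ + 1))) ^ n * ‖w‖ ^ n :=
    h1.trans ((norm_mul_le _ _).trans (mul_le_mul hn (norm_pow_le _ _) (norm_nonneg _)
      (by positivity)))
  rw [← mul_pow] at h2
  have h3 := le_of_pow_le_pow_left₀ hn0.ne' (by positivity) h2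
  have h4 : ‖k‖ / (2 * (‖w‖ + 1)) * ‖w‖ < ‖k‖ := by
    rw [div_mul_eq_mul_div, div_lt_iff₀ (by positivity)]
    nlinarith [norm_nonneg w]
  linarith

lemma catalan_le (n : ℕ) : (catalan n : ℝ) ≤ 4 ^ n := by
  have h1 := succ_mul_catalan_eq_centralBinom n
  have h2 : n.centralBinom ≤ 2 ^ (2 * n) := by
    rw [Nat.centralBinom]; exact Nat.choose_le_two_pow _ _
  have h3 : catalan n ≤ 4 ^ n := by
    rw [pow_mul] at h2
    norm_num at h2
    nlinarith [Nat.zero_le (n * catalan n)]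
  exact_mod_cast h3

lemma catalan_exists (r : A) (h : nzSpec r = ∅) :
    ∃ C : A, C = 1 + r * (C * C) ∧ ∀ x, Commute r x → Commute C x := by
  set f : ℕ → A := fun n => (catalan n : ℂ) • r ^ n with hf
  have hs : Summable fun n => ‖f n‖ := by
    refine summable_of_isBigO_nat (g := fun n => (1 / 2 : ℝ) ^ n)
      (summable_geometric_of_lt_one (by norm_num) (by norm_num)) ?_
    refine Asymptotics.IsBigO.of_bound 1 ?_
    filter_upwards [qn_pow r h (1 / 8) (by norm_num)] with n hn
    rw [norm_norm, hf]
    simp only [norm_smul, one_mul, norm_natCast]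
    calc (catalan n : ℝ) * ‖r ^ n‖ ≤ 4 ^ n * (1 / 8) ^ n :=
          mul_le_mul (catalan_le n) hn (norm_nonneg _) (by positivity)
      _ = (1 / 2) ^ n := by rw [← mul_pow]; norm_num
      _ ≤ ‖(1 / 2 : ℝ) ^ n‖ := Real.le_norm_self _
  refine ⟨∑' n, f n, ?_, ?_⟩
  · rw [tsum_mul_tsum_eq_tsum_sum_antidiagonal_of_summable_norm hs hs]
    rw [hs.of_norm.tsum_eq_zero_add]
    have hs2 := (summable_norm_sum_mul_antidiagonal_of_summable_norm hs hs).of_norm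
    rw [← hs2.tsum_mul_left]
    congr 1
    · simp [hf]
    · apply tsum_congr
      intro n
      simp only [hf]
      rw [catalan_succ', Nat.cast_sum, Finset.sum_smul, Finset.mul_sum]
      apply Finset.sum_congr rfl
      intro p hp
      rw [Finset.HasAntidiagonal.mem_antidiagonal] at hp
      rw [smul_mul_smul_comm, ← pow_add, hp, mul_smul_comm, pow_succ']
      push_cast
      rfl
  · intro x hx
    exact Commute.tsum_left _ fun n => (hx.pow_left n).smul_left _

open Polynomial in
lemma exists_riesz_idem (c : A) (hfin : (nzSpec c).Finite) (hne : (nzSpec c).Nonempty) :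
    ∃ f g : A, f = c * g ∧ f = g * c ∧ f * f = f ∧ f ≠ 0 := by
  classical
  have : Nontrivial A := NormOneClass.nontrivial
  obtain ⟨l, hl⟩ := hne
  have hl0 : l ≠ 0 := hl.2
  set S : Finset ℂ := hfin.toFinset.erase l with hS
  have hlS : l ∉ S := by simp [hS]
  set P : ℂ[X] := ∏ k ∈ S, (X - C k) with hP
  have hPl : P.eval l ≠ 0 := by
    rw [hP, eval_prod, Finset.prod_ne_zero_iff]
    intro k hk
    simp only [eval_sub, eval_X, eval_C]
    exact sub_ne_zero.2 fun h => hlS (h ▸ hk)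
  set q' : ℂ[X] := C ((l * P.eval l)⁻¹) * P with hq'
  set q : ℂ[X] := X * q' with hq
  have hql : q.eval l = 1 := by
    simp only [hq, hq', eval_mul, eval_X, eval_C]
    field_simp
  have hqo : ∀ k ∈ spectrum ℂ c, k ≠ l → q.eval k = 0 := by
    intro k hk hkl
    by_cases hk0 : k = 0
    · simp [hq, hk0]
    · have hkS : k ∈ S := by
        simp only [hS, Finset.mem_erase, Set.Finite.mem_toFinset]
        exact ⟨hkl, hk, hk0⟩
      have : P.eval k = 0 := by
        rw [hP, eval_prod]
        exact Finset.prod_eq_zero hkS (by simp)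
      simp [hq, hq', this]
  set d : A := aeval c q with hd
  set r : A := d - d * d with hr
  have hcd : Commute c d := by
    have : Commute (aeval c (X : ℂ[X])) (aeval c q) := by
      rw [Commute, SemiconjBy, ← map_mul, ← map_mul, mul_comm]
    simpa using this
  have hcq : Commute c (aeval c q') := by
    have : Commute (aeval c (X : ℂ[X])) (aeval c q') := by
      rw [Commute, SemiconjBy, ← map_mul, ← map_mul, mul_comm]
    simpa using this
  have hdc : d = c * aeval c q' := by simp [hd, hq]
  have hrq : nzSpec r = ∅ := by
    have e : r = aeval c (q - q * q) := by simp [hr, hd]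
    ext k
    simp only [Set.mem_empty_iff_false, iff_false]
    rintro ⟨hk, hk0⟩
    rw [e, spectrum.map_polynomial_aeval] at hk
    obtain ⟨m, hm, rfl⟩ := hk
    apply hk0
    by_cases hml : m = l
    · simp [hml, hql]
    · simp [hqo m hm hml]
  have h1d : (1 : ℂ) ∈ nzSpec d := by
    refine ⟨?_, by simp⟩
    rw [hd, spectrum.map_polynomial_aeval]
    exact ⟨l, hl.1, hql⟩
  obtain ⟨K, hK, hKc⟩ := catalan_exists r hrq
  have hrd : Commute r d := (Commute.refl d).sub_left ((Commute.refl d).mul_left (Commute.refl d))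
  have hrc : Commute r c := by
    exact hcd.symm.sub_left (hcd.symm.mul_left hcd.symm)
  have hKd : Commute K d := hKc d hrd
  have hKcc : Commute K c := hKc c hrc
  have hKr : Commute K r := hKc r (Commute.refl r)
  set s : A := 1 - 2 * (r * K) with hs
  have hrK2 : r * (K * K) = K - 1 := by
    rw [eq_sub_iff_add_eq, add_comm]; exact hK.symm
  have hs2 : s * s = 1 - 4 * r := by
    have : (r * K) * (r * K) = r * (K - 1) := by
      rw [← hrK2, ← mul_assoc, mul_assoc r K r, hKr.eq]; noncomm_ring
    calc s * s = 1 - 4 * (r * K) + 4 * ((r * K) * (r * K)) := by rw [hs]; noncomm_ring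
      _ = 1 - 4 * r := by rw [this]; noncomm_ring
  have hsu : IsUnit s := by
    have h4 : (1 / 4 : ℂ) ∉ spectrum ℂ r := by
      intro h
      have : (1 / 4 : ℂ) ∈ nzSpec r := ⟨h, by simp⟩
      rw [hrq] at this
      exact this
    rw [spectrum.notMem_iff] at h4
    have h5 := ((IsUnit.mk0 (4 : ℂ) (by norm_num)).map (algebraMap ℂ A)).mul h4
    rw [mul_sub, ← map_mul] at h5
    have h6 : IsUnit (s * s) := by
      rw [hs2]
      convert h5 using 2
      · norm_num
      · norm_num [map_ofNat]
    exact ((Commute.refl s).isUnit_mul_iff.1 h6).1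
  obtain ⟨t, ht1, ht2⟩ : ∃ t, s * t = 1 ∧ t * s = 1 := by
    obtain ⟨u, hu⟩ := hsu
    exact ⟨(↑u⁻¹ : A), by rw [← hu]; simp, by rw [← hu]; simp⟩
  have comm_t : ∀ x, Commute s x → Commute t x := by
    intro x hx
    calc t * x = t * x * (s * t) := by rw [ht1, mul_one]
      _ = t * (x * s) * t := by noncomm_ring
      _ = t * (s * x) * t := by rw [hx.eq]
      _ = (t * s) * x * t := by noncomm_ring
      _ = x * t := by rw [ht2, one_mul]
  have comm_s : ∀ x, Commute r x → Commute s x := by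
    intro x hx
    refine (Commute.one_left x).sub_left (Commute.mul_left ?_ (hx.mul_left (hKc x hx)))
    exact Commute.ofNat_left 2 x
  have htc : Commute t c := comm_t c (comm_s c hrc)
  have htd : Commute t d := comm_t d (comm_s d hrd)
  have htr : Commute t r := comm_t r (comm_s r (Commute.refl r))
  have htK : Commute t K := comm_t K (comm_s K hKr.symm)
  -- n = d - r K
  have hrK : Commute (r * K) d := hrd.mul_left hKd
  have hn : (d - r * K) * (d - r * K) = s * (d - r * K) := by
    have e1 : (r * K) * (r * K) = r * K - r := by
      calc (r * K) * (r * K) = r * (K * r) * K := by noncomm_ring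
        _ = r * (r * (K * K)) := by rw [hKr.eq]; noncomm_ring
        _ = r * K - r := by rw [hrK2]; noncomm_ring
    have e2 : d * d = d - r := by rw [hr]; abel
    calc (d - r * K) * (d - r * K) = d * d - d * (r * K) - (r * K) * d + (r * K) * (r * K) := by
          noncomm_ring
      _ = d + r * K - 2 * ((r * K) * d) - 2 * r := by rw [← hrK.eq, e1, e2]; noncomm_ring
      _ = d - r * K - 2 * ((r * K) * d) + 2 * ((r * K) * (r * K)) := by rw [e1]; noncomm_ring
      _ = s * (d - r * K) := by rw [hs]; noncomm_ring
  have htn : Commute t (d - r * K) := htd.sub_right (htr.mul_right htK)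
  have hform : d - r * K = c * (aeval c q' * (1 - (1 - d) * K)) := by
    rw [← mul_assoc, ← hdc, hr]; noncomm_ring
  have hcg : Commute c (aeval c q' * (1 - (1 - d) * K) * t) := by
    refine (hcq.mul_right ?_).mul_right htc.symm
    exact (Commute.one_right c).sub_right
      (((Commute.one_right c).sub_right hcd).mul_right hKcc.symm)
  refine ⟨(d - r * K) * t, aeval c q' * (1 - (1 - d) * K) * t, ?_, ?_, ?_, ?_⟩
  · rw [hform]; noncomm_ring
  · rw [← hcg.eq, hform]; noncomm_ring
  · calc (d - r * K) * t * ((d - r * K) * t) = (d - r * K) * (t * (d - r * K)) * t := by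
          noncomm_ring
      _ = ((d - r * K) * (d - r * K)) * t * t := by rw [htn.eq]; noncomm_ring
      _ = (s * (d - r * K)) * t * t := by rw [hn]
      _ = (s * ((d - r * K) * t)) * t := by noncomm_ring
      _ = (s * t) * (d - r * K) * t := by rw [← htn.eq]; noncomm_ring
      _ = _ := by rw [ht1, one_mul]
  · intro h0
    have h1 : d - r * K = 0 := by
      calc d - r * K = (d - r * K) * t * s := by rw [mul_assoc, ht2, mul_one]
        _ = 0 := by rw [h0, zero_mul]
    have h2 := qn_mul r K hKr.symm hrq
    rw [← sub_eq_zero.1 h1] at h2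
    rw [h2] at h1d
    exact h1d

lemma srank_mul_le (y a : A) : srank (y * a) ≤ srank a := by
  refine iSup_le fun x => ?_
  rw [← mul_assoc]
  exact le_iSup (fun x : A => (nzSpec (x * a)).encard) (x * y)

lemma encard_le_srank (y a : A) : (nzSpec (y * a)).encard ≤ srank a :=
  le_iSup (fun x : A => (nzSpec (x * a)).encard) y

lemma one_mem_nzSpec_idem (f : A) (hf : f * f = f) (h0 : f ≠ 0) (m : ℂ) (hm : m ≠ 0) :
    m ∈ nzSpec (m • f) := by
  refine ⟨fun hu => h0 ?_, hm⟩
  obtain ⟨u, hu⟩ := hu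
  have : (u : A) * f = 0 := by
    rw [hu, sub_mul, ← Algebra.smul_def, smul_mul_assoc, hf, sub_self]
  simpa using this

lemma exists_min_idem (hss : JacobsonSemisimple A) (hsoc : socle A ≠ {0}) :
    ∃ e : A, e ≠ 0 ∧ e * e = e ∧ ∀ x, ∃ l : ℂ, e * x * e = l • e := by
  have h0s : (0 : A) ∈ socle A := by
    have : srank (0 : A) = 0 := by
      have : Nontrivial A := NormOneClass.nontrivial
      simp [srank, nzSpec]
    simp [socle, this]
  obtain ⟨a0, ha0, ha00⟩ : ∃ a ∈ socle A, a ≠ 0 := by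
    by_contra! h
    exact hsoc (Set.eq_singleton_iff_unique_mem.2 ⟨h0s, h⟩)
  obtain ⟨a, ⟨haS, ha0⟩, hamin⟩ := (InvImage.wf (srank : A → ℕ∞) wellFounded_lt).has_min
    {a : A | a ∈ socle A ∧ a ≠ 0} ⟨a0, ha0, ha00⟩
  have hamin : ∀ b ∈ socle A, b ≠ 0 → srank a ≤ srank b :=
    fun b hb hb0 => not_lt.1 (hamin b ⟨hb, hb0⟩)
  obtain ⟨y, hy⟩ : ∃ y, (nzSpec (y * a)).Nonempty := by
    by_contra! h
    exact ha0 (eq_zero_of_rad hss a h)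
  have hfin : ∀ b ∈ socle A, ∀ y, (nzSpec (y * b)).Finite := by
    intro b hb y
    rw [← Set.encard_ne_top_iff]
    exact ne_top_of_le_ne_top hb (encard_le_srank y b)
  obtain ⟨e, g, -, heg, hee, he0⟩ := exists_riesz_idem (y * a) (hfin a haS y) hy
  have hea : srank e ≤ srank a := by
    rw [heg, ← mul_assoc]; exact srank_mul_le _ _
  have heS : e ∈ socle A := ne_top_of_le_ne_top haS hea
  -- minimality of `e` among idempotents
  have key : ∀ f, f ≠ 0 → f * f = f → e * f = f → f * e = f → f = e := by
    intro f hf0 hff hef hfe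
    by_contra hne
    have hfe' : srank f ≤ srank e := by
      rw [← hfe]; exact srank_mul_le _ _
    have hfS : f ∈ socle A := ne_top_of_le_ne_top heS hfe'
    have hef' : srank e ≤ srank f := hea.trans (hamin f hfS hf0)
    obtain ⟨y, hy⟩ : ∃ y, (nzSpec (y * f)).encard = srank f :=
      ENat.exists_eq_iSup_of_lt_top (lt_top_iff_ne_top.2 hfS)
    have hh0 : e - f ≠ 0 := sub_ne_zero.2 (Ne.symm hne)
    have hhh : (e - f) * (e - f) = e - f := by
      rw [sub_mul, mul_sub, mul_sub, hee, hef, hfe, hff]; abel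
    obtain ⟨m, hm⟩ := ((hfin f hfS y).union (Set.finite_singleton 0)).exists_notMem
    have hm1 : m ∉ nzSpec (y * f) := fun h => hm (Or.inl h)
    have hm0 : m ≠ 0 := fun h => hm (Or.inr h)
    have hfh : f * (e - f) = 0 := by rw [mul_sub, hfe, hff, sub_self]
    have hhf : (e - f) * f = 0 := by rw [sub_mul, hef, hff, sub_self]
    set w := f * y * f + m • (e - f) with hw
    have hwe : w * e = w := by
      rw [hw, add_mul, mul_assoc, hfe, smul_mul_assoc, sub_mul, hee, hfe]
    have o1 : (f * y * f) * (m • (e - f)) = 0 := by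
      rw [mul_smul_comm, mul_assoc, hfh, mul_zero, smul_zero]
    have o2 : (m • (e - f)) * (f * y * f) = 0 := by
      rw [smul_mul_assoc, ← mul_assoc, ← mul_assoc, hhf, zero_mul, zero_mul, smul_zero]
    have s1 : nzSpec (y * f) ⊆ nzSpec w := by
      have := nzSpec_add_of_orth _ _ o1 o2
      rwa [mul_assoc f y f, nzSpec_comm f, mul_assoc y f f, hff, ← mul_assoc] at this
    have s2 : m ∈ nzSpec w := by
      have := nzSpec_add_of_orth _ _ o2 o1
      rw [add_comm] at this
      exact this (one_mem_nzSpec_idem _ hhh hh0 m hm0)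
    have s3 : (insert m (nzSpec (y * f))).encard ≤ srank e := by
      have h := encard_le_srank w e
      rw [hwe] at h
      exact (Set.encard_le_encard (Set.insert_subset s2 s1)).trans h
    rw [Set.encard_insert_of_notMem hm1, hy] at s3
    have s4 := s3.trans hef'
    exact absurd s4 (not_le.2 ((ENat.lt_add_one_iff hfS).2 le_rfl))
  have star : ∀ x, e * x = x → x * e = x → (nzSpec x).Nonempty → ∃ g, x * g = e ∧ g * x = e := by
    intro x hex hxe hx
    have hfx : (nzSpec x).Finite := by
      have := hfin e heS x
      rwa [hxe] at this
    obtain ⟨f, g, h1, h2, hff, hf0⟩ := exists_riesz_idem x hfx hx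
    have : f = e := by
      apply key f hf0 hff
      · rw [h1, ← mul_assoc, hex]
      · rw [h2, mul_assoc, hxe]
    exact ⟨g, by rw [← h1, this], by rw [← h2, this]⟩
  refine ⟨e, he0, hee, fun x => ?_⟩
  set z := e * x * e with hz
  have hez : e * z = z := by rw [hz, ← mul_assoc, ← mul_assoc, hee]
  have hze : z * e = z := by rw [hz, mul_assoc, hee]
  obtain ⟨l, hl⟩ : ∃ l : ℂ, ¬ ((∃ g, (l • e - z) * g = e) ∧ ∃ g, g * (l • e - z) = e) := by
    by_cases hne : (nzSpec z).Nonempty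
    · obtain ⟨l, hl, hl0⟩ := hne
      have hl0 : l ≠ 0 := hl0
      refine ⟨l, ?_⟩
      rintro ⟨⟨g, hg⟩, g', hg'⟩
      apply hl
      rw [spectrum.mem_resolventSet_iff, isUnit_iff_exists_and_exists]
      refine ⟨⟨e * g + l⁻¹ • (1 - e), ?_⟩, ⟨g' * e + l⁻¹ • (1 - e), ?_⟩⟩
      · have e1 : (algebraMap ℂ A l - z) * (e * g) = e := by
          rw [← mul_assoc, sub_mul, hze, ← Algebra.smul_def, hg]
        have e2 : (algebraMap ℂ A l - z) * (1 - e) = l • (1 - e) := by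
          rw [sub_mul, ← Algebra.smul_def, mul_sub, hze, mul_one, sub_self, sub_zero]
        rw [mul_add, e1, mul_smul_comm, e2, smul_smul, inv_mul_cancel₀ hl0, one_smul]; abel
      · have e1 : (g' * e) * (algebraMap ℂ A l - z) = e := by
          rw [mul_assoc, mul_sub, hez, ← Algebra.commutes, ← Algebra.smul_def, hg']
        have e2 : (1 - e) * (algebraMap ℂ A l - z) = l • (1 - e) := by
          rw [mul_sub, ← Algebra.commutes, ← Algebra.smul_def, sub_mul, hez, one_mul, sub_self,
            sub_zero]
        rw [add_mul, e1, smul_mul_assoc, e2, smul_smul, inv_mul_cancel₀ hl0, one_smul]; abel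
    · rw [Set.not_nonempty_iff_eq_empty] at hne
      refine ⟨0, ?_⟩
      rw [zero_smul, zero_sub]
      rintro ⟨⟨g, hg⟩, g', hg'⟩
      have e1 : e * g = g' * e := by
        calc e * g = (g' * -z) * g := by rw [hg']
          _ = g' * (-z * g) := mul_assoc _ _ _
          _ = g' * e := by rw [hg]
      have c1 : z * (e * g) = -e := by rw [← mul_assoc, hze, ← hg]; simp
      have c2 : (e * g) * z = -e := by rw [e1, mul_assoc, hez, ← hg']; simp
      have := qn_mul z (e * g) (by rw [Commute, SemiconjBy, c1, c2]) hne
      rw [c1] at this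
      have h1 := one_mem_nzSpec_idem e hee he0 (-1) (by simp)
      rw [neg_one_smul, this] at h1
      exact h1
  refine ⟨l, ?_⟩
  set v := l • e - z with hv
  have hev : e * v = v := by rw [hv, mul_sub, mul_smul_comm, hee, hez]
  have hve : v * e = v := by rw [hv, sub_mul, smul_mul_assoc, hee, hze]
  have : v = 0 := by
    apply eq_zero_of_rad hss
    intro y
    by_contra hne
    rw [← ne_eq, ← Set.nonempty_iff_ne_empty] at hne
    apply hl
    have n1 : nzSpec (y * v) = nzSpec (e * y * v) := by
      rw [mul_assoc e y v, nzSpec_comm e, mul_assoc, hve]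
    have n2 : nzSpec (y * v) = nzSpec (v * y * e) := by
      rw [nzSpec_comm (v * y) e, ← mul_assoc, hev, nzSpec_comm]
    obtain ⟨g1, -, hg1⟩ := star (e * y * v) (by rw [← mul_assoc, ← mul_assoc, hee])
      (by rw [mul_assoc, hve]) (n1 ▸ hne)
    obtain ⟨g2, hg2, -⟩ := star (v * y * e) (by rw [← mul_assoc, ← mul_assoc, hev])
      (by rw [mul_assoc, hee]) (n2 ▸ hne)
    exact ⟨⟨y * e * g2, by simpa only [mul_assoc] using hg2⟩, ⟨g1 * (e * y), by simpa only [mul_assoc] using hg1⟩⟩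
  exact (sub_eq_zero.1 this).symm

lemma rho_smul_idem (e : A) (he : e * e = e) (h0 : e ≠ 0) (l : ℂ) :
    spectralRadius ℂ (l • e) = ‖l‖₊ := by
  apply le_antisymm
  · refine iSup₂_le fun k hk => ?_
    by_cases hk0 : k = 0
    · simp [hk0]
    by_cases hkl : k = l
    · simp [hkl]
    exfalso
    apply hk
    have hkl' : k - l ≠ 0 := sub_ne_zero.2 hkl
    have e1 : (algebraMap ℂ A k - l • e) * e = (k - l) • e := by
      rw [sub_mul, ← Algebra.smul_def, smul_mul_assoc, he, sub_smul]
    have e2 : (algebraMap ℂ A k - l • e) * (1 - e) = k • (1 - e) := by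
      rw [mul_sub, e1, mul_one, Algebra.algebraMap_eq_smul_one, sub_smul, smul_sub]; abel
    have f1 : e * (algebraMap ℂ A k - l • e) = (k - l) • e := by
      rw [mul_sub, ← Algebra.commutes, ← Algebra.smul_def, mul_smul_comm, he, sub_smul]
    have f2 : (1 - e) * (algebraMap ℂ A k - l • e) = k • (1 - e) := by
      rw [sub_mul, f1, one_mul, Algebra.algebraMap_eq_smul_one, sub_smul, smul_sub]; abel
    rw [spectrum.mem_resolventSet_iff, isUnit_iff_exists_and_exists]
    refine ⟨⟨(k - l)⁻¹ • e + k⁻¹ • (1 - e), ?_⟩, ⟨(k - l)⁻¹ • e + k⁻¹ • (1 - e), ?_⟩⟩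
    · rw [mul_add, mul_smul_comm, mul_smul_comm, e1, e2, smul_smul, smul_smul,
        inv_mul_cancel₀ hk0, inv_mul_cancel₀ hkl']; simp
    · rw [add_mul, smul_mul_assoc, smul_mul_assoc, f1, f2, smul_smul, smul_smul,
        inv_mul_cancel₀ hk0, inv_mul_cancel₀ hkl']; simp
  · by_cases hl : l = 0
    · simp [hl]
    · exact le_iSup₂ (f := fun k (_ : k ∈ spectrum ℂ (l • e)) => (‖k‖₊ : ENNReal)) l
        (one_mem_nzSpec_idem e he h0 l hl).1

lemma prime_elem (hp : IsPrimeAlgebra A) (a b : A) (h : ∀ x, a * x * b = 0) : a = 0 ∨ b = 0 := by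
  by_contra! hc
  have h1 : TwoSidedIdeal.span {a} ≠ ⊥ := by
    intro h
    have : a ∈ TwoSidedIdeal.span {a} := TwoSidedIdeal.subset_span rfl
    rw [h] at this
    exact hc.1 (by simpa using this)
  have h2 : TwoSidedIdeal.span {b} ≠ ⊥ := by
    intro h
    have : b ∈ TwoSidedIdeal.span {b} := TwoSidedIdeal.subset_span rfl
    rw [h] at this
    exact hc.2 (by simpa using this)
  obtain ⟨x, hx, y, hy, hxy⟩ := hp _ _ h1 h2
  apply hxy
  clear hxy
  have hx1 : ∀ t, x * t * b = 0 := by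
    induction hx using TwoSidedIdeal.span_induction with
    | mem x hx => obtain rfl := hx; exact h
    | zero => simp
    | add x y _ _ h1 h2 => intro t; rw [add_mul, add_mul, h1, h2, add_zero]
    | neg x _ h1 => intro t; rw [neg_mul, neg_mul, h1, neg_zero]
    | left_absorb s x _ h1 => intro t; rw [mul_assoc s, mul_assoc s, h1, mul_zero]
    | right_absorb s x _ h1 => intro t; rw [mul_assoc x, h1]
  have hy1 : ∀ t, x * t * y = 0 := by
    induction hy using TwoSidedIdeal.span_induction with
    | mem y hy => obtain rfl := hy; exact hx1
    | zero => simp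
    | add y z _ _ h1 h2 => intro t; rw [mul_add, h1, h2, add_zero]
    | neg y _ h1 => intro t; rw [mul_neg, h1, neg_zero]
    | left_absorb s y _ h1 => intro t; rw [← mul_assoc, mul_assoc x, h1]
    | right_absorb s y _ h1 => intro t; rw [← mul_assoc, h1, zero_mul]
  simpa using hy1 1

lemma dom_of_prime (hss : JacobsonSemisimple A) (hsoc : socle A ≠ {0}) (hp : IsPrimeAlgebra A)
    (a b : A) (H : ∀ x : A, spectralRadius ℂ (a * x) ≤ spectralRadius ℂ (b * x)) :
    ∃ lam : ℂ, ‖lam‖ ≤ 1 ∧ a = lam • b := by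
  obtain ⟨e, he0, hee, hT⟩ := exists_min_idem hss hsoc
  choose T hT using hT
  have inj : ∀ k l : ℂ, k • e = l • e → k = l := fun k l h => smul_left_injective ℂ he0 h
  have Tadd : ∀ x y, T (x + y) = T x + T y := by
    intro x y
    apply inj
    rw [← hT, add_smul, ← hT, ← hT]; noncomm_ring
  have Tsub : ∀ x y, T (x - y) = T x - T y := by
    intro x y
    apply inj
    rw [← hT, sub_smul, ← hT, ← hT]; noncomm_ring
  have Tsmul : ∀ (k : ℂ) x, T (k • x) = k * T x := by
    intro k x
    apply inj
    rw [← hT, mul_smul, ← hT, mul_smul_comm, smul_mul_assoc]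
  have rho : ∀ c y z, spectralRadius ℂ (c * (y * e * z)) = ‖T (z * c * y)‖₊ := by
    intro c y z
    rw [← rho_smul_idem e hee he0, ← hT]
    have e1 : c * (y * e * z) = (c * y * e) * (e * z) := by
      calc c * (y * e * z) = c * y * e * z := by noncomm_ring
        _ = c * y * (e * e) * z := by rw [hee]
        _ = _ := by noncomm_ring
    rw [e1, rho_comm]
    congr 1
    noncomm_ring
  have dom : ∀ y z, ‖T (z * a * y)‖ ≤ ‖T (z * b * y)‖ := by
    intro y z
    have := H (y * e * z)
    rw [rho, rho] at this
    exact_mod_cast this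
  have fin : ∀ c, (∀ y z, T (z * c * y) = 0) → c = 0 := by
    intro c hc
    have h1 : ∀ y, c * y * e = 0 := by
      intro y
      refine (prime_elem hp e (c * y * e) fun z => ?_).resolve_left he0
      have := hT (z * c * y)
      rw [hc, zero_smul] at this
      simpa only [mul_assoc] using this
    exact (prime_elem hp c e h1).resolve_right he0
  by_cases hb : ∀ y z, T (z * b * y) = 0
  · refine ⟨0, by simp, ?_⟩
    rw [zero_smul]
    apply fin
    intro y z
    have := dom y z
    rw [hb, norm_zero] at this
    exact norm_le_zero_iff.1 this
  push Not at hb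
  obtain ⟨y0, z0, h0⟩ := hb
  set l := T (z0 * a * y0) / T (z0 * b * y0) with hl
  have hl0 : T (z0 * a * y0) = l * T (z0 * b * y0) := by rw [hl]; field_simp
  -- fixed z0
  have row : ∀ y, T (z0 * a * y) = l * T (z0 * b * y) := by
    intro y
    have h := dom (y - (T (z0 * b * y) / T (z0 * b * y0)) • y0) z0
    rw [mul_sub, mul_sub, mul_smul_comm, mul_smul_comm, Tsub, Tsub, Tsmul, Tsmul,
      div_mul_cancel₀ _ h0, sub_self, norm_zero, norm_le_zero_iff, sub_eq_zero] at h
    rw [h, hl]; field_simp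
  have col : ∀ y, T (z0 * b * y) ≠ 0 → ∀ z, T (z * a * y) = l * T (z * b * y) := by
    intro y hy z
    have h := dom y (z - (T (z * b * y) / T (z0 * b * y)) • z0)
    rw [sub_mul, sub_mul, sub_mul, sub_mul, smul_mul_assoc, smul_mul_assoc, smul_mul_assoc,
      smul_mul_assoc, Tsub, Tsub, Tsmul, Tsmul,
      div_mul_cancel₀ _ hy, sub_self, norm_zero, norm_le_zero_iff, sub_eq_zero] at h
    rw [h, row]; field_simp
  refine ⟨l, ?_, ?_⟩
  · rw [hl, norm_div]
    exact div_le_one_of_le₀ (dom y0 z0) (norm_nonneg _)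
  · rw [← sub_eq_zero]
    apply fin
    intro y z
    rw [mul_sub, sub_mul, mul_smul_comm, smul_mul_assoc, Tsub, Tsmul, sub_eq_zero]
    by_cases hy : T (z0 * b * y) = 0
    · have h1 := col (y + y0) (by rw [mul_add, Tadd, hy, zero_add]; exact h0) z
      have h2 := col y0 h0 z
      rw [mul_add, mul_add, Tadd, Tadd, h2, mul_add] at h1
      exact add_right_cancel h1
    · exact col y hy z

lemma rho_smul_le (l : ℂ) (hl : ‖l‖ ≤ 1) (x : A) :
    spectralRadius ℂ (l • x) ≤ spectralRadius ℂ x := by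
  have : Nontrivial A := NormOneClass.nontrivial
  refine iSup₂_le fun k hk => ?_
  rw [spectrum.smul_eq_smul l x (spectrum.nonempty x)] at hk
  obtain ⟨m, hm, rfl⟩ := hk
  refine le_trans ?_ (le_iSup₂ (f := fun k (_ : k ∈ spectrum ℂ x) => (‖k‖₊ : ENNReal)) m hm)
  have : ‖l • m‖ ≤ ‖m‖ := by
    rw [norm_smul]
    exact mul_le_of_le_one_left (norm_nonneg _) hl
  exact_mod_cast this

end Helpers

theorem prime_iff_spectralRadius_domination_of_socle_ne_zero
    {A : Type*} [NormedRing A] [NormOneClass A] [NormedAlgebra ℂ A] [CompleteSpace A]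
    (hss : JacobsonSemisimple A) (hsoc : socle A ≠ {0}) :
    IsPrimeAlgebra A ↔
      ∀ a b : A,
        ((∀ x : A, spectralRadius ℂ (a * x) ≤ spectralRadius ℂ (b * x)) ↔
          ∃ lam : ℂ, ‖lam‖ ≤ 1 ∧ a = lam • b) := by
  constructor
  · intro hp a b
    refine ⟨dom_of_prime hss hsoc hp a b, ?_⟩
    rintro ⟨l, hl, rfl⟩ x
    rw [smul_mul_assoc]
    exact rho_smul_le l hl _
  · exact prime_of_dom hss
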